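/- For all ε > 0 and C > 0 there exists K > 0 with the following property: for every integer m ≥ 1 and all univalent maps g_1, ..., g_m : D_ε → ℂ with g_i([-1,1]) = [-1,1] and sup_{D_ε} |g_i - id| ≤ C for each i, there exist radii ε/3 = ρ_m ≥ ρ_{m-1} ≥ ... ≥ ρ_0 with ρ_0 ≥ (ε/3) · exp(-K Σ_{i=1}^m sup_{D_ε} |g_i - id|) such that g_i(D_{ρ_{i-1}}) ⊆ D_{ρ_i} for every i = 1, ..., m. In particular the composition g_m ∘ ⋯ ∘ g_1 is well-defined on D_{ρ_0} and maps D_{ρ_0} into D_{ε/3}. -/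

import Mathlib

/-!
Write `s` for the supremum of `|g - id|` over the `ε`-stadium. Around each `x ∈ [-1,1]` the disc of
radius `ε` lies in the stadium, and there the oscillation of `g - id` about its value at `x` is at
most `2 s`, so the Schwarz lemma gives `|g z - g x| ≤ (1 + (2 / ε) s) |z - x|`. Since `g x ∈ [-1,1]`,
taking `x` to be a point of `[-1,1]` nearest to `z` shows that `g` enlarges the radius of a stadium
at most by the factor `1 + (2 / ε) s ≤ exp ((2 / ε) s)`. Multiplying these factors along the chain,
starting from the radius `ε / 3` at the end, gives the radii, with `K = 2 / ε`.
-/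

/-- The interval `[-1,1]` viewed as a subset of `ℂ`. -/
noncomputable def realSeg : Set ℂ := (fun x : ℝ => (x : ℂ)) '' Set.Icc (-1 : ℝ) 1

/-- The `a`-stadium: points at distance `< a` from `[-1,1]`. -/
noncomputable def stadium (a : ℝ) : Set ℂ := {z : ℂ | Metric.infDist z realSeg < a}

lemma isCompact_realSeg : IsCompact realSeg :=
  isCompact_Icc.image Complex.continuous_ofReal

lemma realSeg_nonempty : realSeg.Nonempty :=
  ⟨((0 : ℝ) : ℂ), 0, by norm_num, rfl⟩

lemma ball_subset_stadium {x : ℂ} (hx : x ∈ realSeg) (a : ℝ) :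
    Metric.ball x a ⊆ stadium a := fun _ hz =>
  (Metric.infDist_le_dist_of_mem hx).trans_lt hz

/-- The inner supremum is an empty one, equal to `0`, off the stadium; this is harmless because
distances are nonnegative. -/
lemma dist_le_biSup {ε C : ℝ} (hC : 0 < C) {g : ℂ → ℂ}
    (hg : ∀ z ∈ stadium ε, dist (g z) z ≤ C) {z : ℂ} (hz : z ∈ stadium ε) :
    dist (g z) z ≤ ⨆ w ∈ stadium ε, dist (g w) w := by
  have hbdd : BddAbove (Set.range fun w => ⨆ _ : w ∈ stadium ε, dist (g w) w) := by
    refine ⟨C, ?_⟩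
    rintro _ ⟨w, rfl⟩
    exact Real.iSup_le (fun hw => hg w hw) hC.le
  have h := le_ciSup hbdd z
  simpa [hz] using h

/-- One step of the chain: a map within `s` of the identity on the `ε`-stadium and preserving
`[-1,1]` enlarges stadium radii `r ≤ ε` at most by the factor `exp ((2 / ε) s)`. -/
lemma image_stadium_subset {ε s r : ℝ} (hε : 0 < ε) (hr : r ≤ ε) {g : ℂ → ℂ}
    (hd : DifferentiableOn ℂ g (stadium ε)) (hseg : g '' realSeg = realSeg)
    (hg : ∀ z ∈ stadium ε, dist (g z) z ≤ s) :
    g '' stadium r ⊆ stadium (r * Real.exp (2 / ε * s)) := by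
  rintro _ ⟨z, hz, rfl⟩
  obtain ⟨x, hx, hzx⟩ := isCompact_realSeg.exists_infDist_eq_dist realSeg_nonempty z
  have hzr : dist z x < r := by rw [← hzx]; exact hz
  have hball := ball_subset_stadium hx ε
  have hxε : x ∈ stadium ε := hball (Metric.mem_ball_self hε)
  have hgx : g x ∈ realSeg := hseg ▸ Set.mem_image_of_mem g hx
  have hmaps : Set.MapsTo (fun w => g w - w) (Metric.ball x ε)
      (Metric.closedBall (g x - x) (2 * s)) := by
    intro w hw
    have h1 := hg w (hball hw)
    have h2 := hg x hxε
    rw [dist_eq_norm] at h1 h2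
    rw [Metric.mem_closedBall, dist_eq_norm]
    exact (norm_sub_le _ _).trans (by linarith)
  have hosc : dist (g z - z) (g x - x) ≤ 2 * s / ε * dist z x :=
    Complex.dist_le_div_mul_dist_of_mapsTo_ball
      ((hd.mono hball).sub differentiableOn_id) hmaps (hzr.trans_le hr)
  have hlip : dist (g z) (g x) ≤ Real.exp (2 / ε * s) * dist z x := by
    have h1 : dist (g z) (g x) ≤ dist (g z - z) (g x - x) + dist z x := by
      simp only [dist_eq_norm]
      calc ‖g z - g x‖ = ‖(g z - z - (g x - x)) + (z - x)‖ := by congr 1; ring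
        _ ≤ _ := norm_add_le _ _
    have h2 : (2 / ε * s + 1) * dist z x ≤ Real.exp (2 / ε * s) * dist z x :=
      mul_le_mul_of_nonneg_right (Real.add_one_le_exp _) dist_nonneg
    have h3 : 2 * s / ε = 2 / ε * s := by ring
    rw [h3] at hosc
    linarith
  calc Metric.infDist (g z) realSeg ≤ dist (g z) (g x) := Metric.infDist_le_dist_of_mem hgx
    _ ≤ Real.exp (2 / ε * s) * dist z x := hlip
    _ < Real.exp (2 / ε * s) * r := mul_lt_mul_of_pos_left hzr (Real.exp_pos _)
    _ = r * Real.exp (2 / ε * s) := mul_comm _ _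

/-- **Chain estimate for compositions of univalent maps near the identity.**
For all `ε > 0`, `C > 0` there is `K > 0` such that for univalent maps
`g_1, …, g_m : D_ε → ℂ` with `g_i([-1,1]) = [-1,1]` and `sup_{D_ε}|g_i - id| ≤ C`, there
are radii `ε/3 = ρ_m ≥ … ≥ ρ_0 ≥ (ε/3)·exp(-K Σ_i sup_{D_ε}|g_i - id|)` with
`g_i(D_{ρ_{i-1}}) ⊆ D_{ρ_i}` for all `i`.  (Maps are indexed here by `0, …, m-1`, so
`g i` maps `D_{ρ i}` into `D_{ρ (i+1)}`.) -/
theorem stmt9 (ε C : ℝ) (hε : 0 < ε) (hC : 0 < C) :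
    ∃ K : ℝ, 0 < K ∧
      ∀ (m : ℕ), 1 ≤ m → ∀ g : ℕ → ℂ → ℂ,
        (∀ i < m, DifferentiableOn ℂ (g i) (stadium ε) ∧ Set.InjOn (g i) (stadium ε) ∧
            g i '' realSeg = realSeg ∧ ∀ z ∈ stadium ε, dist (g i z) z ≤ C) →
        ∃ ρ : ℕ → ℝ,
          ρ m = ε / 3 ∧
          (∀ i < m, ρ i ≤ ρ (i + 1)) ∧
          (ε / 3) * Real.exp (-(K * ∑ i ∈ Finset.range m, ⨆ z ∈ stadium ε, dist (g i z) z))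
            ≤ ρ 0 ∧
          ∀ i < m, g i '' stadium (ρ i) ⊆ stadium (ρ (i + 1)) := by
  refine ⟨2 / ε, by positivity, fun m _ g hg => ?_⟩
  set s : ℕ → ℝ := fun i => ⨆ z ∈ stadium ε, dist (g i z) z
  have hs : ∀ i, 0 ≤ s i := fun i =>
    Real.iSup_nonneg fun z => Real.iSup_nonneg fun _ => dist_nonneg
  set ρ : ℕ → ℝ := fun i => ε / 3 * Real.exp (-(2 / ε * ∑ j ∈ Finset.Ico i m, s j)) with hρ
  have hstep : ∀ i < m, ρ (i + 1) = ρ i * Real.exp (2 / ε * s i) := by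
    intro i hi
    simp only [hρ]
    rw [Finset.sum_eq_sum_Ico_succ_bot hi, mul_assoc, ← Real.exp_add]
    congr 2
    ring
  have hρpos : ∀ i, 0 < ρ i := fun i => by positivity
  have hρle : ∀ i, ρ i ≤ ε := by
    intro i
    have hexp : Real.exp (-(2 / ε * ∑ j ∈ Finset.Ico i m, s j)) ≤ 1 := by
      rw [Real.exp_le_one_iff, neg_nonpos]
      exact mul_nonneg (by positivity) (Finset.sum_nonneg fun j _ => hs j)
    have := mul_le_mul_of_nonneg_left hexp (by positivity : 0 ≤ ε / 3)
    simp only [hρ]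
    linarith
  refine ⟨ρ, by simp [hρ], fun i hi => ?_, by simp [hρ], fun i hi => ?_⟩
  · rw [hstep i hi]
    exact le_mul_of_one_le_right (hρpos i).le
      (Real.one_le_exp (mul_nonneg (by positivity) (hs i)))
  · obtain ⟨hd, -, hseg, hC'⟩ := hg i hi
    rw [hstep i hi]
    exact image_stadium_subset hε (hρle i) hd hseg fun z hz => dist_le_biSup hC hC' hz
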